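/- The series ∑_{a ≥ 1} μ²(a)/φ(a²) over all positive integers a converges and its sum is at most 1.95. -/

import Mathlib

/-!
Since `φ(p²) = p(p - 1)`, the Euler factor at `p` of the multiplicative function `μ²(a)/φ(a²)` is
`1 + 1/(p(p - 1)) = (1 - p⁻²)⁻¹ (1 - p⁻³)⁻¹ / (1 - p⁻⁶)⁻¹`, so the series has the exact sum
`ζ(2)ζ(3)/ζ(6) ≈ 1.9436`. The bound then follows from `ζ(2) = π²/6`, from `ζ(6) ≥ 1 + 2⁻⁶`, and
from comparing the tail of `ζ(3)` with a telescoping series.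
-/

open Filter Finset Topology

section EulerProduct

variable {f : ArithmeticFunction ℝ}

theorem sum_range_le_prod_primesBelow_tsum (hf : f.IsMultiplicative) (hf₀ : ∀ n, 0 ≤ f n)
    (hsum : ∀ {p : ℕ}, p.Prime → Summable fun e ↦ f (p ^ e)) (N : ℕ) :
    ∑ n ∈ range N, f n ≤ ∏ p ∈ N.primesBelow, ∑' e, f (p ^ e) := by
  have hsmooth : HasSum (N.smoothNumbers.indicator f) (∏ p ∈ N.primesBelow, ∑' e, f (p ^ e)) :=
    hasSum_subtype_iff_indicator.mp
      (EulerProduct.summable_and_hasSum_smoothNumbers_prod_primesBelow_tsum hf.1 hf.2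
        (fun hp ↦ (hsum hp).norm) N).2
  calc ∑ n ∈ range N, f n = ∑ n ∈ range N, N.smoothNumbers.indicator f n := by
        refine sum_congr rfl fun n hn ↦ ?_
        rcases n.eq_zero_or_pos with rfl | hn₀
        · simp [Set.indicator]
        · exact (Set.indicator_of_mem
            (Nat.mem_smoothNumbers_of_lt hn₀ (mem_range.mp hn)) f).symm
    _ ≤ _ := sum_le_hasSum _ (fun n _ ↦ Set.indicator_nonneg (fun n _ ↦ hf₀ n) n) hsmooth

theorem hasSum_of_tendsto_prod_primesBelow (hf : f.IsMultiplicative) (hf₀ : ∀ n, 0 ≤ f n)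
    (hsum : ∀ {p : ℕ}, p.Prime → Summable fun e ↦ f (p ^ e)) {L : ℝ}
    (hL : Tendsto (fun N : ℕ ↦ ∏ p ∈ N.primesBelow, ∑' e, f (p ^ e)) atTop (𝓝 L)) :
    HasSum f L := by
  obtain ⟨C, hC⟩ := hL.bddAbove_range
  have hf_sum : Summable f := summable_of_sum_range_le hf₀ fun N ↦
    (sum_range_le_prod_primesBelow_tsum hf hf₀ hsum N).trans (hC ⟨N, rfl⟩)
  exact tendsto_nhds_unique (hf.eulerProduct hf_sum.norm) hL ▸ hf_sum.hasSum

end EulerProduct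

theorem hasSum_apply_prime_pow_of_eq_zero_of_not_squarefree {R : Type*} [Semiring R]
    [TopologicalSpace R] {f : ArithmeticFunction R} (hf : f.IsMultiplicative)
    (hf_sq : ∀ n, ¬Squarefree n → f n = 0) {p : ℕ} (hp : p.Prime) :
    HasSum (fun e ↦ f (p ^ e)) (1 + f p) := by
  have hzero (e : ℕ) (he : e ∉ range 2) : f (p ^ e) = 0 := by
    refine hf_sq _ fun h ↦ he (mem_range.mpr ?_)
    rcases Nat.squarefree_pow_iff hp.ne_one (by grind) |>.mp h with ⟨-, rfl⟩
    exact one_lt_two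
  simpa [sum_range_succ, hf.map_one] using hasSum_sum_of_ne_finset_zero hzero

/-- The function `a ↦ μ²(a)/φ(a²)`, bundled as an arithmetic function so that its sum can be
computed from its Euler product. -/
noncomputable def squarefreeInvTotientSq : ArithmeticFunction ℝ where
  toFun a := if Squarefree a then (1 : ℝ) / (Nat.totient (a ^ 2)) else 0
  map_zero' := by simp

theorem squarefreeInvTotientSq_apply (a : ℕ) :
    squarefreeInvTotientSq a = if Squarefree a then (1 : ℝ) / (Nat.totient (a ^ 2)) else 0 :=
  rfl

theorem squarefreeInvTotientSq_nonneg (a : ℕ) : 0 ≤ squarefreeInvTotientSq a := by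
  rw [squarefreeInvTotientSq_apply]
  positivity

theorem isMultiplicative_squarefreeInvTotientSq : squarefreeInvTotientSq.IsMultiplicative := by
  refine ⟨by simp [squarefreeInvTotientSq_apply], fun {m n} hmn ↦ ?_⟩
  simp only [squarefreeInvTotientSq_apply, Nat.squarefree_mul hmn, mul_pow,
    Nat.totient_mul (hmn.pow 2 2), Nat.cast_mul, one_div, mul_inv, ite_zero_mul_ite_zero]

theorem squarefreeInvTotientSq_apply_prime {p : ℕ} (hp : p.Prime) :
    squarefreeInvTotientSq p = 1 / ((p : ℝ) * (p - 1)) := by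
  rw [squarefreeInvTotientSq_apply, if_pos hp.prime.squarefree,
    Nat.totient_prime_pow_succ hp, pow_one, Nat.cast_mul, Nat.cast_pred hp.pos]

theorem hasSum_squarefreeInvTotientSq_prime_pow {p : ℕ} (hp : p.Prime) :
    HasSum (fun e ↦ squarefreeInvTotientSq (p ^ e)) (1 + 1 / ((p : ℝ) * (p - 1))) := by
  rw [← squarefreeInvTotientSq_apply_prime hp]
  exact hasSum_apply_prime_pow_of_eq_zero_of_not_squarefree
    isMultiplicative_squarefreeInvTotientSq (fun _ h ↦ if_neg h) hp

/-- The value `ζ(k)` of the Riemann zeta function at a natural number `k ≥ 2`, as a real number so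
that it can be estimated. The term `n = 0` of the series is `1 / 0 = 0`. -/
noncomputable def realZeta (k : ℕ) : ℝ := ∑' n : ℕ, 1 / (n : ℝ) ^ k

theorem sum_range_le_realZeta {k : ℕ} (hk : 1 < k) (N : ℕ) :
    ∑ n ∈ range N, 1 / (n : ℝ) ^ k ≤ realZeta k :=
  (Real.summable_one_div_nat_pow.mpr hk).sum_le_tsum _ fun _ _ ↦ by positivity

theorem one_le_realZeta {k : ℕ} (hk : 1 < k) : 1 ≤ realZeta k := by
  simpa [sum_range_succ, (zero_lt_one.trans hk).ne'] using sum_range_le_realZeta hk 2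

theorem tendsto_prod_primesBelow_realZeta {k : ℕ} (hk : 1 < k) :
    Tendsto (fun N : ℕ ↦ ∏ p ∈ N.primesBelow, (1 - 1 / (p : ℝ) ^ k)⁻¹) atTop
      (𝓝 (realZeta k)) := by
  let f : ℕ →*₀ ℝ :=
    { toFun n := 1 / (n : ℝ) ^ k
      map_zero' := by simp [(zero_lt_one.trans hk).ne']
      map_one' := by simp
      map_mul' m n := by rw [Nat.cast_mul, mul_pow, one_div_mul_one_div] }
  have hf : Summable fun n ↦ ‖f n‖ := (Real.summable_one_div_nat_pow.mpr hk).norm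
  exact EulerProduct.eulerProduct_completely_multiplicative hf

theorem one_add_one_div_mul_sub_one {K : Type*} [Field K] {x : K} (hx : x ≠ 0)
    (hx₆ : x ^ 6 ≠ 1) :
    1 + 1 / (x * (x - 1)) =
      (1 - 1 / x ^ 2)⁻¹ * (1 - 1 / x ^ 3)⁻¹ / (1 - 1 / x ^ 6)⁻¹ := by
  have h₁ : x - 1 ≠ 0 := fun h ↦ hx₆ (by grind)
  have h₂ : x ^ 2 - 1 ≠ 0 := fun h ↦ hx₆ (by grind)
  have h₃ : x ^ 3 - 1 ≠ 0 := fun h ↦ hx₆ (by grind)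
  have : x ^ 6 - 1 ≠ 0 := sub_ne_zero.mpr hx₆
  field_simp
  ring

theorem hasSum_squarefreeInvTotientSq :
    HasSum squarefreeInvTotientSq (realZeta 2 * realZeta 3 / realZeta 6) := by
  refine hasSum_of_tendsto_prod_primesBelow isMultiplicative_squarefreeInvTotientSq
    squarefreeInvTotientSq_nonneg
    (fun hp ↦ (hasSum_squarefreeInvTotientSq_prime_pow hp).summable) ?_
  have hζ : realZeta 6 ≠ 0 := (one_pos.trans_le (one_le_realZeta (by norm_num))).ne'
  have hlim := ((tendsto_prod_primesBelow_realZeta (k := 2) (by norm_num)).mul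
    (tendsto_prod_primesBelow_realZeta (k := 3) (by norm_num))).div
    (tendsto_prod_primesBelow_realZeta (k := 6) (by norm_num)) hζ
  refine hlim.congr fun N ↦ ?_
  rw [Pi.div_apply, ← prod_mul_distrib, ← prod_div_distrib]
  refine prod_congr rfl fun p hp ↦ ?_
  have hp := Nat.prime_of_mem_primesBelow hp
  have hp₁ : (1 : ℝ) < p := by exact_mod_cast hp.one_lt
  rw [(hasSum_squarefreeInvTotientSq_prime_pow hp).tsum_eq,
    one_add_one_div_mul_sub_one (by positivity) (one_lt_pow₀ hp₁ (by norm_num)).ne']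

theorem realZeta_two : realZeta 2 = Real.pi ^ 2 / 6 :=
  hasSum_zeta_two.tsum_eq

theorem one_div_cube_le_sub {K : Type*} [Field K] [LinearOrder K] [IsStrictOrderedRing K] {x : K}
    (hx : 1 < x) :
    1 / x ^ 3 ≤ 1 / (2 * x * (x - 1)) - 1 / (2 * (x + 1) * x) := by
  have : 0 < x - 1 := sub_pos.mpr hx
  have hpos : 0 < (x - 1) * x * (x + 1) := by positivity
  calc 1 / x ^ 3 ≤ 1 / ((x - 1) * x * (x + 1)) :=
        one_div_le_one_div_of_le hpos (by nlinarith)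
    _ = 1 / (2 * x * (x - 1)) - 1 / (2 * (x + 1) * x) := by
        field_simp
        ring

theorem tsum_le_of_le_sub_succ {f g : ℕ → ℝ} (hf : ∀ n, 0 ≤ f n) (hg : ∀ n, 0 ≤ g n)
    (hfg : ∀ n, f n ≤ g n - g (n + 1)) : ∑' n, f n ≤ g 0 :=
  Real.tsum_le_of_sum_range_le hf fun N ↦
    calc ∑ n ∈ range N, f n ≤ ∑ n ∈ range N, (g n - g (n + 1)) := sum_le_sum fun n _ ↦ hfg n
      _ = g 0 - g N := sum_range_sub' g N
      _ ≤ g 0 := sub_le_self _ (hg N)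

theorem realZeta_three_le {m : ℕ} (hm : 1 < m) :
    realZeta 3 ≤ ∑ n ∈ range m, 1 / (n : ℝ) ^ 3 + 1 / (2 * (m : ℝ) * (m - 1)) := by
  let g (x : ℝ) : ℝ := 1 / (2 * x * (x - 1))
  have hlt (i : ℕ) : (1 : ℝ) < (i + m : ℕ) := by exact_mod_cast hm.trans_le (Nat.le_add_left m i)
  have hg (i : ℕ) : 0 ≤ g (i + m : ℕ) := by
    have := sub_pos.mpr (hlt i)
    positivity
  have hstep (i : ℕ) :
      1 / ((i + m : ℕ) : ℝ) ^ 3 ≤ g (i + m : ℕ) - g (i + 1 + m : ℕ) := by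
    rw [Nat.add_right_comm i 1 m, Nat.cast_succ]
    simpa only [g, add_sub_cancel_right] using one_div_cube_le_sub (hlt i)
  have htail := tsum_le_of_le_sub_succ (fun _ ↦ by positivity) hg hstep
  rw [realZeta, ← (Real.summable_one_div_nat_pow.mpr (by norm_num)).sum_add_tsum_nat_add m]
  simpa [g] using htail

theorem realZeta_two_mul_realZeta_three_div_realZeta_six_le :
    realZeta 2 * realZeta 3 / realZeta 6 ≤ 1.95 := by
  have h₂ : realZeta 2 ≤ 1.645 := by
    rw [realZeta_two]
    nlinarith [Real.pi_lt_d4, Real.pi_pos]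
  have h₃ : realZeta 3 ≤ 1.203 :=
    (realZeta_three_le (m := 5) (by norm_num)).trans (by norm_num [sum_range_succ])
  have h₆ : 1.015 ≤ realZeta 6 :=
    le_trans (by norm_num [sum_range_succ]) (sum_range_le_realZeta (by norm_num) 3)
  calc realZeta 2 * realZeta 3 / realZeta 6 ≤ 1.645 * 1.203 / 1.015 := by
        have : 0 ≤ realZeta 3 := zero_le_one.trans (one_le_realZeta (by norm_num))
        gcongr
    _ ≤ 1.95 := by norm_num

/-- The series `∑_{a ≥ 1} μ²(a)/φ(a²)` over all positive integers `a` converges and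
its sum is at most `1.95`. -/
theorem tsum_squarefree_inv_totient_sq_le :
    Summable (fun a : ℕ => if Squarefree a then (1 : ℝ) / (Nat.totient (a ^ 2)) else 0) ∧
    (∑' a : ℕ, if Squarefree a then (1 : ℝ) / (Nat.totient (a ^ 2)) else 0) ≤ 1.95 := by
  have hsum := hasSum_squarefreeInvTotientSq
  exact ⟨hsum.summable,
    hsum.tsum_eq.trans_le realZeta_two_mul_realZeta_three_div_realZeta_six_le⟩
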